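/- Let a, b : [0,1] → ℝ be Lipschitz functions, and let Ω = {(s,x) ∈ ℝ² : x ∈ (0,1), a(x) < b(x), a(x) < s < b(x)} be nonempty. Let β be a C¹ function on an open neighborhood of the closure of Ω with β(Ω) ⊂ (0,1) and ∂β/∂s (s,x) ≠ 0 for all (s,x) in the closure of Ω. Let f₁, f₂ : [0,1] → ℝ be C¹ functions with Lipschitz derivatives such that either f₁' > 0 on [0,1] or f₁' < 0 on [0,1]. For x ∈ [0,1] set J(x) = {s ∈ (a(x),b(x)) : f₁(β(s,x)) < f₂(x)} if a(x) < b(x) and J(x) = ∅ otherwise, and let Ω' = {(s,x) : x ∈ (0,1), s ∈ J(x)}. Let α be a C¹ function on an open neighborhood of the closure of Ω' with α(Ω') ⊂ (0,1) and ∂α/∂s (s,x) ≠ 0 for all (s,x) in the closure of Ω', and let k : (0,1) → ℝ be measurable and bounded. Then the linear map K sending f ∈ L²(0,1) to the function Kf(x) = ∫_{J(x)} k(β(s,x)) f(α(s,x)) ds is a well-defined bounded linear operator from L²(0,1) to L²(0,1), and K is a compact operator. -/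

import Mathlib

open MeasureTheory Set

instance : Fact ((1 : ENNReal) ≤ 2) := ⟨by norm_num⟩


universe u

theorem hs_compact {E : Type u} {F : Type*} [NormedAddCommGroup E] [InnerProductSpace ℝ E] [CompleteSpace E]
    [NormedAddCommGroup F] [NormedSpace ℝ F] [CompleteSpace F] (T : E →L[ℝ] F) (C : ℝ)
    (h : ∀ (ι : Type u) (v : ι → E), Orthonormal ℝ v → ∀ s : Finset ι, ∑ i ∈ s, ‖T (v i)‖ ^ 2 ≤ C) :
    IsCompactOperator T := by
  classical
  obtain ⟨w, e, -⟩ := exists_hilbertBasis ℝ E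
  have hs : Summable (fun i => ‖T (e i)‖ ^ 2) :=
    summable_of_sum_le (fun i => by positivity) (h _ e e.orthonormal)
  rw [summable_iff_vanishing_norm] at hs
  let S : Finset w → (E →L[ℝ] F) := fun s =>
    ∑ i ∈ s, (ContinuousLinearMap.toSpanSingleton ℝ (T (e i))).comp (innerSL ℝ (e i))
  have hSc : ∀ s, IsCompactOperator (S s) := by
    intro s
    induction s using Finset.induction_on with
    | empty =>
      simp only [S, Finset.sum_empty]
      exact isCompactOperator_zero
    | insert i s hi ih =>
      have : S (insert i s) = (ContinuousLinearMap.toSpanSingleton ℝ (T (e i))).comp (innerSL ℝ (e i)) + S s := by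
        simp only [S, Finset.sum_insert hi]
      rw [this]
      refine IsCompactOperator.add (f := ((ContinuousLinearMap.toSpanSingleton ℝ (T (e i))).comp (innerSL ℝ (e i)))) ?_ ih
      exact IsCompactOperator.comp_clm (f := ContinuousLinearMap.toSpanSingleton ℝ (T (e i)))
        (isCompactOperator_of_locallyCompactSpace_rng _) (innerSL ℝ (e i))
  have hSapp : ∀ s f, S s f = ∑ i ∈ s, inner ℝ (e i) f • T (e i) := by
    intro s f
    simp [S, ContinuousLinearMap.sum_apply]
  refine isCompactOperator_of_tendsto (l := Filter.atTop) (F := S) ?_ (Filter.Eventually.of_forall hSc)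
  rw [Metric.tendsto_atTop]
  intro ε hε
  obtain ⟨s₀, hs₀⟩ := hs ((ε/2)^2) (by positivity)
  refine ⟨s₀, fun s hss => ?_⟩
  rw [dist_comm, dist_eq_norm]
  refine lt_of_le_of_lt (b := ε/2) ?_ (by linarith)
  refine ContinuousLinearMap.opNorm_le_bound _ (by positivity) fun f => ?_
  have h1 : HasSum (fun i => inner ℝ (e i) f • T (e i)) (T f) := by
    have := (e.hasSum_repr f).mapL T
    simpa [HilbertBasis.repr_apply_apply] using this
  have h2 : Filter.Tendsto (fun t : Finset w => ‖∑ i ∈ t, inner ℝ (e i) f • T (e i) - S s f‖)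
      Filter.atTop (nhds ‖T f - S s f‖) := (h1.sub_const _).norm
  refine le_of_tendsto h2 ?_
  filter_upwards [Filter.eventually_ge_atTop s] with t ht
  rw [hSapp, ← Finset.sum_sdiff ht, add_sub_cancel_right]
  have hd : Disjoint (t \ s) s₀ := Finset.sdiff_disjoint.mono_right hss
  have h3 := hs₀ _ hd
  rw [Real.norm_of_nonneg (Finset.sum_nonneg fun i _ => by positivity)] at h3
  have h4 : ‖∑ i ∈ t \ s, inner ℝ (e i) f • T (e i)‖ ≤
      ∑ i ∈ t \ s, ‖inner ℝ (e i) f‖ * ‖T (e i)‖ :=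
    (norm_sum_le _ _).trans (le_of_eq (Finset.sum_congr rfl fun i _ => norm_smul _ _))
  refine h4.trans (le_of_sq_le_sq ?_ (by positivity))
  refine (Finset.sum_mul_sq_le_sq_mul_sq _ _ _).trans ?_
  have h5 := e.orthonormal.sum_inner_products_le f (s := t \ s)
  rw [mul_pow, mul_comm]
  exact mul_le_mul h3.le h5 (Finset.sum_nonneg fun i _ => by positivity) (by positivity)

theorem bessel_functional {E ι : Type*} [NormedAddCommGroup E] [InnerProductSpace ℝ E]
    (φ : E →L[ℝ] ℝ) (M : ℝ) (hM : ∀ f, |φ f| ≤ M * ‖f‖) (v : ι → E)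
    (hv : Orthonormal ℝ v) (s : Finset ι) : ∑ i ∈ s, φ (v i) ^ 2 ≤ M ^ 2 := by
  set S := ∑ i ∈ s, φ (v i) ^ 2 with hS
  have hS0 : 0 ≤ S := Finset.sum_nonneg fun i _ => sq_nonneg _
  let u := ∑ i ∈ s, φ (v i) • v i
  have h1 : φ u = S := by simp [u, S, pow_two]
  have h2 : ‖u‖ ^ 2 = S := by
    rw [← real_inner_self_eq_norm_sq, hv.inner_sum]
    simp [S, pow_two]
  have h3 := hM u
  rw [h1, abs_of_nonneg hS0, ← h2] at h3
  rw [← h2]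
  by_cases hu : ‖u‖ = 0
  · rw [hu]; nlinarith [sq_nonneg M]
  · have hup : 0 < ‖u‖ := lt_of_le_of_ne (norm_nonneg _) (Ne.symm hu)
    have : ‖u‖ ≤ M := by
      have : ‖u‖ * ‖u‖ ≤ M * ‖u‖ := by nlinarith
      exact le_of_mul_le_mul_right this hup
    gcongr

theorem build_op {X : Type*} [MeasurableSpace X] (μ : Measure X) [IsFiniteMeasure μ]
    (φ : X → (Lp ℝ 2 μ →L[ℝ] ℝ)) (M : ℝ) (hM0 : 0 ≤ M)
    (hM : ∀ x f, |φ x f| ≤ M * ‖f‖)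
    (hmeas : ∀ f, AEStronglyMeasurable (fun x => φ x f) μ) :
    ∃ K : Lp ℝ 2 μ →L[ℝ] Lp ℝ 2 μ, IsCompactOperator K ∧
      ∀ f, ∀ᵐ x ∂μ, (K f : X → ℝ) x = φ x f := by
  have hmem : ∀ f, MemLp (fun x => φ x f) 2 μ := fun f =>
    MemLp.of_bound (hmeas f) (M * ‖f‖) (Filter.Eventually.of_forall fun x => hM x f)
  let K₀ : Lp ℝ 2 μ →ₗ[ℝ] Lp ℝ 2 μ :=
    { toFun := fun f => (hmem f).toLp
      map_add' := fun f g => by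
        rw [← MemLp.toLp_add]
        congr 1
        ext x
        simp
      map_smul' := fun c f => by
        rw [RingHom.id_apply, ← MemLp.toLp_const_smul]
        congr 1
        ext x
        simp }
  have hK₀ : ∀ f, ∀ᵐ x ∂μ, (K₀ f : X → ℝ) x = φ x f := fun f => (hmem f).coeFn_toLp
  let K := K₀.mkContinuous ((measureUnivNNReal μ : ℝ) ^ (2:ENNReal).toReal⁻¹ * M) (fun f => by
    have := Lp.norm_le_of_ae_bound (f := K₀ f) (C := M * ‖f‖) (by positivity) (by
      filter_upwards [hK₀ f] with x hx
      rw [hx]; exact hM x f)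
    rw [mul_assoc]; exact this)
  refine ⟨K, ?_, hK₀⟩
  refine hs_compact K (∫ x, M ^ 2 ∂μ) fun ι v hv s => ?_
  have h1 : ∀ i, ‖K (v i)‖ ^ 2 = ∫ x, (φ x (v i)) ^ 2 ∂μ := by
    intro i
    rw [← real_inner_self_eq_norm_sq, L2.inner_def]
    refine integral_congr_ae ?_
    filter_upwards [hK₀ (v i)] with x hx
    have hx' : (K (v i) : X → ℝ) x = φ x (v i) := hx
    rw [hx']
    simp [pow_two]
  simp_rw [h1]
  rw [← integral_finsetSum _ (fun i _ => (hmem (v i)).integrable_sq)]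
  refine integral_mono (integrable_finsetSum _ (fun i _ => (hmem (v i)).integrable_sq))
    (integrable_const _) fun x => ?_
  exact bessel_functional (φ x) M (hM x) v hv s

theorem build_functional {μ ν : Measure ℝ} [IsFiniteMeasure ν] (A w : ℝ → ℝ) (C L : NNReal) (B : ℝ)
    (hB : 0 ≤ B) (hν : ν univ ≤ L)
    (hA : AEMeasurable A ν) (hw : AEStronglyMeasurable w ν) (hwB : ∀ᵐ s ∂ν, |w s| ≤ B)
    (hmap : ν.map A ≤ (C : ENNReal) • μ) :
    ∃ φ : Lp ℝ 2 μ →L[ℝ] ℝ, (∀ f, φ f = ∫ s, w s * (f : ℝ → ℝ) (A s) ∂ν) ∧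
      ∀ f, |φ f| ≤ (B * ((C:ℝ) ^ (1/2 : ℝ) * (L:ℝ) ^ (1/2 : ℝ))) * ‖f‖ := by
  have hac : ν.map A ≪ μ := Measure.absolutelyContinuous_of_le_smul hmap
  have hmem : ∀ f : Lp ℝ 2 μ, MemLp (fun s => (f : ℝ → ℝ) (A s)) 2 ν := fun f => by
    have : MemLp (f : ℝ → ℝ) 2 (ν.map A) :=
      ((Lp.memLp f).smul_measure (by simp)).mono_measure hmap
    exact (memLp_map_measure_iff (this.1) hA).1 this
  have hint1 : ∀ f : Lp ℝ 2 μ, Integrable (fun s => (f : ℝ → ℝ) (A s)) ν := fun f =>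
    (hmem f).integrable (by norm_num)
  have hint : ∀ f : Lp ℝ 2 μ, Integrable (fun s => w s * (f : ℝ → ℝ) (A s)) ν := fun f =>
    (hint1 f).bdd_mul hw hwB
  have hae : ∀ {p : ℝ → Prop}, (∀ᵐ y ∂μ, p y) → ∀ᵐ s ∂ν, p (A s) := fun h =>
    ae_of_ae_map hA (hac.ae_le h)
  let φ₀ : Lp ℝ 2 μ →ₗ[ℝ] ℝ :=
    { toFun := fun f => ∫ s, w s * (f : ℝ → ℝ) (A s) ∂ν
      map_add' := fun f g => by
        rw [← integral_add (hint f) (hint g)]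
        refine integral_congr_ae ?_
        filter_upwards [hae (Lp.coeFn_add f g)] with s hs
        rw [hs, Pi.add_apply, mul_add]
      map_smul' := fun c f => by
        rw [RingHom.id_apply, smul_eq_mul, ← integral_const_mul]
        refine integral_congr_ae ?_
        filter_upwards [hae (Lp.coeFn_smul c f)] with s hs
        rw [hs, Pi.smul_apply, smul_eq_mul]; ring }
  have hbd : ∀ f, ‖φ₀ f‖ ≤ (B * ((C:ℝ) ^ (1/2 : ℝ) * (L:ℝ) ^ (1/2 : ℝ))) * ‖f‖ := by
    intro f
    have h1 : ‖φ₀ f‖ ≤ ∫ s, B * ‖(f : ℝ → ℝ) (A s)‖ ∂ν := by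
      refine norm_integral_le_of_norm_le ((hint1 f).norm.const_mul B) ?_
      filter_upwards [hwB] with s hs
      rw [norm_mul]
      gcongr
      exact hs
    rw [integral_const_mul] at h1
    refine h1.trans ?_
    rw [mul_assoc]
    refine mul_le_mul_of_nonneg_left ?_ hB
    rw [integral_norm_eq_lintegral_enorm (hint1 f).1, ← eLpNorm_one_eq_lintegral_enorm]
    have h2 := eLpNorm_le_eLpNorm_mul_rpow_measure_univ (p := 1) (q := 2) (by norm_num) (hint1 f).1
    have h3 : eLpNorm (fun s => (f : ℝ → ℝ) (A s)) 2 ν ≤ (C : ENNReal) ^ (1/2 : ℝ) * eLpNorm f 2 μ := by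
      have e1 : eLpNorm (f : ℝ → ℝ) 2 (ν.map A) = eLpNorm ((f : ℝ → ℝ) ∘ A) 2 ν :=
        eLpNorm_map_measure (((Lp.memLp f).smul_measure (c := C) (by simp)).mono_measure hmap).1 hA
      have e2 : eLpNorm (f : ℝ → ℝ) 2 (ν.map A) ≤ eLpNorm (f : ℝ → ℝ) 2 ((C : ENNReal) • μ) :=
        eLpNorm_mono_measure _ hmap
      rw [eLpNorm_smul_measure_of_ne_top (by simp), e1] at e2
      simpa [Function.comp_def] using e2
    have h4 : eLpNorm (fun s => (f : ℝ → ℝ) (A s)) 1 ν ≤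
        ((C : ENNReal) ^ (1/2 : ℝ) * (L : ENNReal) ^ (1/2 : ℝ)) * eLpNorm f 2 μ := by
      refine h2.trans ?_
      have e3 : (1 / (1:ENNReal).toReal - 1 / (2:ENNReal).toReal) = (1/2 : ℝ) := by norm_num
      rw [e3, mul_right_comm]
      exact mul_le_mul' h3 (ENNReal.rpow_le_rpow hν (by norm_num))
    have h5 := ENNReal.toReal_mono (by
      refine ENNReal.mul_ne_top (ENNReal.mul_ne_top ?_ ?_) (Lp.eLpNorm_ne_top f) <;>
      exact ENNReal.rpow_ne_top_of_nonneg (by norm_num) (by simp)) h4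
    refine h5.trans (le_of_eq ?_)
    rw [ENNReal.toReal_mul, ENNReal.toReal_mul, Lp.norm_def, ← ENNReal.toReal_rpow, ← ENNReal.toReal_rpow]
    simp
  exact ⟨φ₀.mkContinuous _ hbd, fun f => rfl, hbd⟩

/-- change of variables bound. -/
theorem map_le_of_deriv {S : Set ℝ} (hS : MeasurableSet S) (A A' : ℝ → ℝ) (c : ℝ) (hc : 0 < c)
    (hA : ∀ s ∈ S, HasDerivAt A (A' s) s) (hinj : InjOn A S) (hA' : ∀ s ∈ S, c ≤ |A' s|)
    (V : Set ℝ) (hV : MapsTo A S V) :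
    (volume.restrict S).map A ≤ ((Real.toNNReal c⁻¹ : NNReal) : ENNReal) • volume.restrict V := by
  have hcont : ContinuousOn A S := fun s hs => (hA s hs).continuousAt.continuousWithinAt
  have hAm : AEMeasurable A (volume.restrict S) := hcont.aemeasurable hS
  refine Measure.le_iff.2 fun T hT => ?_
  rw [Measure.map_apply_of_aemeasurable hAm hT, Measure.smul_apply, smul_eq_mul,
    Measure.restrict_apply hT]
  have h0 : (volume.restrict S) (A ⁻¹' T) = ∫⁻ s in S, T.indicator 1 (A s) := by
    have : ∀ s, T.indicator (1 : ℝ → ENNReal) (A s) = (A ⁻¹' T).indicator 1 s := fun s => rfl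
    simp_rw [this]
    rw [lintegral_indicator_one₀ (hAm.nullMeasurableSet_preimage hT)]
  have h1 := lintegral_image_eq_lintegral_abs_deriv_mul hS
    (fun s hs => (hA s hs).hasDerivWithinAt) hinj (T.indicator 1)
  have h2 : ENNReal.ofReal c * ∫⁻ s in S, T.indicator 1 (A s) ≤ ∫⁻ y in A '' S, T.indicator 1 y := by
    rw [h1, ← lintegral_const_mul' _ _ (by simp)]
    refine setLIntegral_mono' hS fun s hs => ?_
    gcongr
    exact hA' s hs
  have h3 : ∫⁻ y in A '' S, T.indicator 1 y ≤ volume (T ∩ V) := by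
    rw [lintegral_indicator_one hT, Measure.restrict_apply hT]
    exact measure_mono (inter_subset_inter_right _ hV.image_subset)
  rw [h0]
  have h4 := h2.trans h3
  have e : ((Real.toNNReal c⁻¹ : NNReal) : ENNReal) = (ENNReal.ofReal c)⁻¹ := by
    rw [← ENNReal.ofReal_inv_of_pos hc]; rfl
  rw [e]
  calc _ = (ENNReal.ofReal c)⁻¹ * (ENNReal.ofReal c * ∫⁻ s in S, T.indicator 1 (A s)) := by
        rw [← mul_assoc, ENNReal.inv_mul_cancel (by simpa using hc) (by simp), one_mul]
    _ ≤ _ := by gcongr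

theorem hasDerivAt_slice (g : ℝ × ℝ → ℝ) (W : Set (ℝ × ℝ)) (hW : IsOpen W)
    (hg : ContDiffOn ℝ 1 g W) (s x : ℝ) (hq : (s, x) ∈ W) :
    HasDerivAt (fun t => g (t, x)) (fderiv ℝ g (s, x) (1, 0)) s := by
  have h1 : HasFDerivAt g (fderiv ℝ g (s, x)) (s, x) :=
    ((hg.differentiableOn one_ne_zero).differentiableAt (hW.mem_nhds hq)).hasFDerivAt
  exact HasFDerivAt.comp_hasDerivAt s h1 ((hasDerivAt_id s).prodMk (hasDerivAt_const s x))

/-- A sublevel set of a function with nonvanishing derivative has no gaps. -/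
theorem sublevel_no_gap (g g' : ℝ → ℝ) (s t m : ℝ)
    (hg : ∀ r ∈ Icc s t, HasDerivAt g (g' r) r) (hg' : ∀ r ∈ Icc s t, g' r ≠ 0)
    (hs : g s < m) (ht : g t < m) : ∀ r ∈ Icc s t, g r < m := by
  intro r hr
  by_contra! hcon
  have hc : ContinuousOn g (Icc s t) := fun r hr => (hg r hr).continuousAt.continuousWithinAt
  obtain ⟨z, hz, hmax⟩ := isCompact_Icc.exists_isMaxOn ⟨r, hr⟩ hc
  have hzm : m ≤ g z := hcon.trans (hmax hr)
  have hz1 : s ≠ z := by rintro rfl; linarith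
  have hz2 : z ≠ t := by rintro rfl; linarith
  have hloc : IsLocalMax g z := hmax.isLocalMax
    (Icc_mem_nhds (lt_of_le_of_ne hz.1 hz1) (lt_of_le_of_ne hz.2 hz2))
  exact hg' z hz (hloc.hasDerivAt_eq_zero (hg z hz))

/-- The integral operators `Kf(x) = ∫_{J(x)} k(β(s,x)) f(α(s,x)) ds` arising from the
method of characteristics define bounded linear operators on `L²(0,1)` which are
compact. -/
theorem integral_operator_compact
    (a b : ℝ → ℝ) (Ka Kb : NNReal)
    (ha : LipschitzOnWith Ka a (Set.Icc 0 1))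
    (hb : LipschitzOnWith Kb b (Set.Icc 0 1))
    (Ω : Set (ℝ × ℝ))
    (hΩ : Ω = {q : ℝ × ℝ |
      q.2 ∈ Set.Ioo (0 : ℝ) 1 ∧ a q.2 < b q.2 ∧ q.1 ∈ Set.Ioo (a q.2) (b q.2)})
    (hΩne : Ω.Nonempty)
    (β : ℝ × ℝ → ℝ) (U : Set (ℝ × ℝ)) (hU : IsOpen U) (hUΩ : closure Ω ⊆ U)
    (hβC1 : ContDiffOn ℝ 1 β U)
    (hβmaps : ∀ q ∈ Ω, β q ∈ Set.Ioo (0 : ℝ) 1)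
    (hβs : ∀ q ∈ closure Ω, fderiv ℝ β q (1, 0) ≠ 0)
    (f₁ f₂ : ℝ → ℝ) (f₁' f₂' : ℝ → ℝ) (K₁ K₂ : NNReal)
    (hf₁ : ∀ x ∈ Set.Icc (0 : ℝ) 1, HasDerivAt f₁ (f₁' x) x)
    (hf₂ : ∀ x ∈ Set.Icc (0 : ℝ) 1, HasDerivAt f₂ (f₂' x) x)
    (hf₁lip : LipschitzOnWith K₁ f₁' (Set.Icc 0 1))
    (hf₂lip : LipschitzOnWith K₂ f₂' (Set.Icc 0 1))
    (hf₁sign : (∀ x ∈ Set.Icc (0 : ℝ) 1, 0 < f₁' x) ∨ (∀ x ∈ Set.Icc (0 : ℝ) 1, f₁' x < 0))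
    (J : ℝ → Set ℝ)
    (hJ : ∀ x, J x =
      if a x < b x then {s : ℝ | s ∈ Set.Ioo (a x) (b x) ∧ f₁ (β (s, x)) < f₂ x} else ∅)
    (Ω' : Set (ℝ × ℝ))
    (hΩ' : Ω' = {q : ℝ × ℝ | q.2 ∈ Set.Ioo (0 : ℝ) 1 ∧ q.1 ∈ J q.2})
    (α : ℝ × ℝ → ℝ) (U' : Set (ℝ × ℝ)) (hU' : IsOpen U') (hU'Ω : closure Ω' ⊆ U')
    (hαC1 : ContDiffOn ℝ 1 α U')
    (hαmaps : ∀ q ∈ Ω', α q ∈ Set.Ioo (0 : ℝ) 1)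
    (hαs : ∀ q ∈ closure Ω', fderiv ℝ α q (1, 0) ≠ 0)
    (k : ℝ → ℝ) (hk : Measurable k)
    (Ck : ℝ) (hkbdd : ∀ ξ ∈ Set.Ioo (0 : ℝ) 1, |k ξ| ≤ Ck) :
    ∃ K : Lp ℝ 2 (volume.restrict (Set.Ioo (0 : ℝ) 1)) →L[ℝ]
        Lp ℝ 2 (volume.restrict (Set.Ioo (0 : ℝ) 1)),
      IsCompactOperator K ∧
        ∀ f : Lp ℝ 2 (volume.restrict (Set.Ioo (0 : ℝ) 1)),
          ∀ᵐ x ∂(volume.restrict (Set.Ioo (0 : ℝ) 1)),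
            (K f : ℝ → ℝ) x = ∫ s in J x, k (β (s, x)) * (f : ℝ → ℝ) (α (s, x)) := by
  classical
  have hac : ContinuousOn a (Icc 0 1) := ha.continuousOn
  have hbc : ContinuousOn b (Icc 0 1) := hb.continuousOn
  have hJm : ∀ x s, s ∈ J x ↔ (a x < s ∧ s < b x) ∧ f₁ (β (s, x)) < f₂ x := by
    intro x s
    rw [hJ]
    split_ifs with h
    · simp
    · simp only [mem_empty_iff_false, false_iff]
      rintro ⟨⟨h1, h2⟩, -⟩
      exact h (h1.trans h2)
  have hΩm : ∀ s x, (s, x) ∈ Ω ↔ x ∈ Ioo (0:ℝ) 1 ∧ a x < s ∧ s < b x := by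
    intro s x
    rw [hΩ]
    simp only [mem_setOf_eq, mem_Ioo]
    constructor
    · rintro ⟨h, -, h2⟩; exact ⟨h, h2⟩
    · rintro ⟨h, h2⟩; exact ⟨h, h2.1.trans h2.2, h2⟩
  have hΩ'm : ∀ s x, (s, x) ∈ Ω' ↔ x ∈ Ioo (0:ℝ) 1 ∧ s ∈ J x := by
    intro s x
    rw [hΩ']; rfl
  have hsub : Ω' ⊆ Ω := by
    rintro ⟨s, x⟩ h
    rw [hΩ'm, hJm] at h
    rw [hΩm]
    exact ⟨h.1, h.2.1⟩
  -- openness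
  have hΩo : IsOpen Ω := by
    have hst : IsOpen ((Prod.snd : ℝ × ℝ → ℝ) ⁻¹' Ioo 0 1) := isOpen_Ioo.preimage continuous_snd
    have hsn : ContinuousOn (Prod.snd : ℝ × ℝ → ℝ) (Prod.snd ⁻¹' Ioo 0 1) := continuous_snd.continuousOn
    have hm : MapsTo (Prod.snd : ℝ × ℝ → ℝ) (Prod.snd ⁻¹' Ioo 0 1) (Icc 0 1) :=
      fun q hq => Ioo_subset_Icc_self hq
    have h1 : ContinuousOn (fun q : ℝ × ℝ => q.1 - a q.2) (Prod.snd ⁻¹' Ioo 0 1) :=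
      continuous_fst.continuousOn.sub (hac.comp hsn hm)
    have h2 : ContinuousOn (fun q : ℝ × ℝ => b q.2 - q.1) (Prod.snd ⁻¹' Ioo 0 1) :=
      (hbc.comp hsn hm).sub continuous_fst.continuousOn
    have := (h1.isOpen_inter_preimage hst isOpen_Ioi (t := Ioi 0)).inter
      (h2.isOpen_inter_preimage hst isOpen_Ioi (t := Ioi 0))
    convert this using 1
    ext ⟨s, x⟩
    rw [hΩm]
    simp only [mem_inter_iff, mem_preimage, mem_Ioi, sub_pos]
    tauto
  have hβc : ContinuousOn β Ω := hβC1.continuousOn.mono (subset_closure.trans hUΩ)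
  have hαc : ContinuousOn α Ω' := hαC1.continuousOn.mono (subset_closure.trans hU'Ω)
  have hΩ'o : IsOpen Ω' := by
    have hf1c : ContinuousOn f₁ (Icc 0 1) := fun x hx => (hf₁ x hx).continuousAt.continuousWithinAt
    have hf2c : ContinuousOn f₂ (Icc 0 1) := fun x hx => (hf₂ x hx).continuousAt.continuousWithinAt
    have h1 : ContinuousOn (fun q : ℝ × ℝ => f₂ q.2 - f₁ (β q)) Ω := by
      refine ContinuousOn.sub (hf2c.comp continuous_snd.continuousOn ?_) (hf1c.comp hβc ?_)
      · rintro ⟨s, x⟩ hq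
        exact Ioo_subset_Icc_self ((hΩm s x).1 hq).1
      · intro q hq
        exact Ioo_subset_Icc_self (hβmaps q hq)
    convert h1.isOpen_inter_preimage hΩo isOpen_Ioi (t := Ioi 0) using 1
    ext ⟨s, x⟩
    rw [hΩ'm, hJm]
    simp only [mem_inter_iff, mem_preimage, mem_Ioi, sub_pos, hΩm]
    tauto
  -- compactness of the closure
  obtain ⟨Ra, hRa⟩ := isCompact_Icc.exists_bound_of_continuousOn hac
  obtain ⟨Rb, hRb⟩ := isCompact_Icc.exists_bound_of_continuousOn hbc
  have hRa0 : 0 ≤ Ra := (norm_nonneg _).trans (hRa 0 (by simp))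
  have hRb0 : 0 ≤ Rb := (norm_nonneg _).trans (hRb 0 (by simp))
  have hJsub : ∀ x ∈ Ioo (0:ℝ) 1, J x ⊆ Icc (-Ra) Rb := by
    intro x hx s hs
    rw [hJm] at hs
    have h1 := hRa x (Ioo_subset_Icc_self hx)
    have h2 := hRb x (Ioo_subset_Icc_self hx)
    rw [Real.norm_eq_abs, abs_le] at h1 h2
    exact ⟨by linarith, by linarith⟩
  have hcpt : IsCompact (closure Ω') := by
    refine ((isCompact_Icc (a := -Ra) (b := Rb)).prod (isCompact_Icc (a := (0:ℝ)) (b := 1))).closure_of_subset ?_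
    rintro ⟨s, x⟩ hq
    rw [hΩ'm] at hq
    exact ⟨hJsub x hq.1 hq.2, Ioo_subset_Icc_self hq.1⟩
  obtain ⟨c, hc, hcα⟩ : ∃ c : ℝ, 0 < c ∧ ∀ q ∈ closure Ω', c ≤ |fderiv ℝ α q (1, 0)| := by
    refine hcpt.exists_forall_le' (f := fun q => |fderiv ℝ α q (1, 0)|) ?_ fun q hq => abs_pos.2 (hαs q hq)
    exact (((hαC1.continuousOn_fderiv_of_isOpen hU' le_rfl).clm_apply continuousOn_const).abs).mono hU'Ω
  -- measurability
  have hαm : Measurable (Ω'.piecewise α 0) :=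
    hαc.measurable_piecewise continuousOn_const hΩ'o.measurableSet
  have hβm : Measurable (Ω'.piecewise β 0) :=
    (hβc.mono hsub).measurable_piecewise continuousOn_const hΩ'o.measurableSet
  have hJmeas : ∀ x ∈ Ioo (0:ℝ) 1, MeasurableSet (J x) := by
    intro x hx
    have : J x = (fun s => (s, x)) ⁻¹' Ω' := by
      ext s
      rw [mem_preimage, hΩ'm]
      exact ⟨fun h => ⟨hx, h⟩, fun h => h.2⟩
    rw [this]
    exact (hΩ'o.preimage (by fun_prop)).measurableSet
  have hCk : 0 ≤ Ck := (abs_nonneg _).trans (hkbdd (1/2) (by norm_num))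
  let μ : Measure ℝ := volume.restrict (Ioo (0:ℝ) 1)
  let L : NNReal := Real.toNNReal (Rb + Ra)
  let C : NNReal := Real.toNNReal c⁻¹
  let M : ℝ := Ck * ((C:ℝ) ^ (1/2 : ℝ) * (L:ℝ) ^ (1/2 : ℝ))
  have key : ∀ x : ℝ, ∃ φ : Lp ℝ 2 μ →L[ℝ] ℝ,
      (x ∈ Ioo (0:ℝ) 1 → ∀ f : Lp ℝ 2 μ, φ f = ∫ s in J x, k (β (s, x)) * (f : ℝ → ℝ) (α (s, x))) ∧
      ∀ f, |φ f| ≤ M * ‖f‖ := by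
    intro x
    by_cases hx : x ∈ Ioo (0:ℝ) 1
    swap
    · exact ⟨0, fun h => absurd h hx, fun f => by
        rw [ContinuousLinearMap.zero_apply, abs_zero]; positivity⟩
    have hJΩ' : ∀ s ∈ J x, (s, x) ∈ Ω' := fun s hs => (hΩ'm s x).2 ⟨hx, hs⟩
    have hvol : volume (J x) ≤ (L : ENNReal) := by
      refine (measure_mono (hJsub x hx)).trans ?_
      rw [Real.volume_Icc, sub_neg_eq_add]
      exact le_rfl
    have hfin : IsFiniteMeasure (volume.restrict (J x)) :=
      ⟨by rw [Measure.restrict_apply_univ]; exact hvol.trans_lt (by simp)⟩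
    have hαd : ∀ s ∈ J x, HasDerivAt (fun t => α (t, x)) (fderiv ℝ α (s, x) (1, 0)) s := fun s hs =>
      hasDerivAt_slice α U' hU' hαC1 s x (hU'Ω (subset_closure (hJΩ' s hs)))
    -- no gaps
    have hord : ∀ s ∈ J x, ∀ t ∈ J x, Icc s t ⊆ J x := by
      intro s hs t ht r hr
      have hI : ∀ r ∈ Icc s t, (r, x) ∈ Ω := by
        intro r hr
        rw [hJm] at hs ht
        rw [hΩm]
        exact ⟨hx, by linarith [hr.1, hs.1.1], by linarith [hr.2, ht.1.2]⟩
      have h1 := sublevel_no_gap (fun r => f₁ (β (r, x)))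
        (fun r => f₁' (β (r, x)) * fderiv ℝ β (r, x) (1, 0)) s t (f₂ x)
        (fun r hr => HasDerivAt.comp r (hf₁ _ (Ioo_subset_Icc_self (hβmaps _ (hI r hr))))
          (hasDerivAt_slice β U hU hβC1 r x (hUΩ (subset_closure (hI r hr)))))
        (fun r hr => mul_ne_zero (by
            have hm := Ioo_subset_Icc_self (hβmaps _ (hI r hr))
            rcases hf₁sign with h | h
            · exact (h _ hm).ne'
            · exact (h _ hm).ne)
          (hβs _ (subset_closure (hI r hr))))
        ((hJm x s).1 hs).2 ((hJm x t).1 ht).2 r hr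
      rw [hJm]
      exact ⟨((hΩm r x).1 (hI r hr)).2, h1⟩
    have hlt : ∀ s ∈ J x, ∀ t ∈ J x, s < t → α (s, x) ≠ α (t, x) := by
      intro s hs t ht hst heq
      have hI := hord s hs t ht
      obtain ⟨z, hz, hz0⟩ := exists_hasDerivAt_eq_zero (f := fun t => α (t, x))
        (f' := fun s => fderiv ℝ α (s, x) (1, 0)) hst
        (fun r hr => (hαd r (hI hr)).continuousAt.continuousWithinAt) heq
        (fun r hr => hαd r (hI (Ioo_subset_Icc_self hr)))
      exact hαs _ (subset_closure (hJΩ' z (hI (Ioo_subset_Icc_self hz)))) hz0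
    have hinj : InjOn (fun t => α (t, x)) (J x) := by
      intro s hs t ht heq
      rcases lt_trichotomy s t with h | h | h
      · exact absurd heq (hlt s hs t ht h)
      · exact h
      · exact absurd heq.symm (hlt t ht s hs h)
    have hmap := map_le_of_deriv (hJmeas x hx) (fun t => α (t, x))
      (fun s => fderiv ℝ α (s, x) (1, 0)) c hc hαd hinj
      (fun s hs => hcα _ (subset_closure (hJΩ' s hs))) (Ioo 0 1)
      (fun s hs => hαmaps _ (hJΩ' s hs))
    have hAm : AEMeasurable (fun t => α (t, x)) (volume.restrict (J x)) :=
      ContinuousOn.aemeasurable (fun r hr => (hαd r hr).continuousAt.continuousWithinAt) (hJmeas x hx)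
    have hwm : AEStronglyMeasurable (fun s => k (β (s, x))) (volume.restrict (J x)) := by
      refine AEMeasurable.aestronglyMeasurable (hk.comp_aemeasurable ?_)
      refine ContinuousOn.aemeasurable (hβc.comp (by fun_prop) ?_) (hJmeas x hx)
      exact fun s hs => hsub (hJΩ' s hs)
    obtain ⟨φ, hφ, hφM⟩ := build_functional (μ := μ) (fun t => α (t, x)) (fun s => k (β (s, x))) C L Ck hCk
      (by rw [Measure.restrict_apply_univ]; exact hvol) hAm hwm
      (by
        filter_upwards [ae_restrict_mem (hJmeas x hx)] with s hs
        exact hkbdd _ (hβmaps _ (hsub (hJΩ' s hs)))) hmap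
    exact ⟨φ, fun _ => hφ, hφM⟩
  choose φ hφ hφM using key
  obtain ⟨K, hK, hKf⟩ := build_op μ φ M (by positivity) hφM (by
    intro f
    let G : ℝ × ℝ → ℝ := Ω'.indicator
      (fun q => k (Ω'.piecewise β 0 q) * (f : ℝ → ℝ) (Ω'.piecewise α 0 q))
    have hG : StronglyMeasurable G := by
      refine Measurable.stronglyMeasurable (Measurable.indicator ?_ hΩ'o.measurableSet)
      exact (hk.comp hβm).mul ((Lp.stronglyMeasurable f).measurable.comp hαm)
    refine (hG.integral_prod_left' (μ := volume)).aestronglyMeasurable.congr ?_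
    filter_upwards [ae_restrict_mem measurableSet_Ioo] with x hx
    rw [hφ x hx f, ← integral_indicator (hJmeas x hx)]
    congr 1
    ext s
    by_cases hs : s ∈ J x
    · have hq : (s, x) ∈ Ω' := (hΩ'm s x).2 ⟨hx, hs⟩
      simp only [G, indicator_of_mem hq, indicator_of_mem hs, piecewise_eq_of_mem _ _ _ hq]
    · have hq : (s, x) ∉ Ω' := fun h => hs ((hΩ'm s x).1 h).2
      simp only [G, indicator_of_notMem hq, indicator_of_notMem hs])
  refine ⟨K, hK, fun f => ?_⟩
  filter_upwards [hKf f, ae_restrict_mem measurableSet_Ioo] with x hx hxI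
  rw [hx, hφ x hxI f]
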